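/- Multi-letter to single-letter lower bound with auxiliary identification (key converse step). Let M, K and the sequences S^n = (S_1,…,S_n), X^n = (X_1,…,X_n) be finitely-valued random variables with an arbitrary joint distribution. For i = 1,…,n define U_i = (M, K, S_{i+1:n}, X_{1:i−1}) and A_i = (X_{1:i−1}, S_{1:i−1}, S_{i+1:n}). Then I(M, K ; X^n | S^n) ≥ Σ_{i=1}^n I(U_i ; X_i | S_i) − Σ_{i=1}^n I(X_i ; A_i | S_i). -/

import Mathlib

open Finset Filter Real

noncomputable section

open scoped Classical

/-- Pushforward of a mass function along a map. -/
def pushf {α β : Type*} [Fintype α] (p : α → ℝ) (f : α → β) : β → ℝ :=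
  fun b => ∑ a, if f a = b then p a else 0

/-- Shannon entropy (in bits) of a mass function on a finite type,
with the convention `0 * logb 2 0 = 0`. -/
def ent {α : Type*} [Fintype α] (p : α → ℝ) : ℝ := -∑ a, p a * Real.logb 2 (p a)

/-- Shannon entropy (in bits) of a random variable `f` under the mass function `p`. -/
def entRV {α β : Type*} [Fintype α] [Fintype β] (p : α → ℝ) (f : α → β) : ℝ :=
  ent (pushf p f)

/-- Mutual information `I(f; g)` (in bits) under the mass function `p`. -/
def mi {α β γ : Type*} [Fintype α] [Fintype β] [Fintype γ]
    (p : α → ℝ) (f : α → β) (g : α → γ) : ℝ :=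
  entRV p f + entRV p g - entRV p (fun a => (f a, g a))

/-- Conditional mutual information `I(f; g | h)` (in bits) under the mass function `p`. -/
def cmi {α β γ δ : Type*} [Fintype α] [Fintype β] [Fintype γ] [Fintype δ]
    (p : α → ℝ) (f : α → β) (g : α → γ) (h : α → δ) : ℝ :=
  entRV p (fun a => (f a, h a)) + entRV p (fun a => (g a, h a))
    - entRV p (fun a => (f a, g a, h a)) - entRV p h

/-- Conditional entropy `H(f | g)` (in bits) under the mass function `p`. -/
def condEnt {α β γ : Type*} [Fintype α] [Fintype β] [Fintype γ]
    (p : α → ℝ) (f : α → β) (g : α → γ) : ℝ :=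
  entRV p (fun a => (f a, g a)) - entRV p g

/-- Total variation distance between two mass functions on a finite type. -/
def TV {α : Type*} [Fintype α] (p q : α → ℝ) : ℝ := (∑ a, |p a - q a|) / 2

/-- The binary entropy function (in bits), with `h2 0 = h2 1 = 0`. -/
def h2 (t : ℝ) : ℝ := -(t * Real.logb 2 t) - (1 - t) * Real.logb 2 (1 - t)

/-! Put `W = (M, K)`. By the chain rule, `I(W; Xⁿ | Sⁿ) = H(Xⁿ | Sⁿ) - H(Xⁿ | W, Sⁿ)` is the sum
over `i` of `H(Xᵢ | X_{1:i-1}, Sⁿ) - H(Xᵢ | X_{1:i-1}, W, Sⁿ)`. On the other side, `H(Xᵢ | Sᵢ)`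
cancels and `I(Uᵢ; Xᵢ | Sᵢ) - I(Xᵢ; Aᵢ | Sᵢ) = H(Xᵢ | Aᵢ, Sᵢ) - H(Xᵢ | Uᵢ, Sᵢ)`. Since `(Aᵢ, Sᵢ)`
determines `(X_{1:i-1}, Sⁿ)` and `(X_{1:i-1}, W, Sⁿ)` determines `(Uᵢ, Sᵢ)`, the inequality holds
term by term because conditioning on more reduces entropy. -/

section PushforwardMass

variable {Ω α β : Type*} [Fintype Ω]

lemma pushf_nonneg {p : Ω → ℝ} (hp : ∀ ω, 0 ≤ p ω) (f : Ω → α) (x : α) : 0 ≤ pushf p f x :=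
  Finset.sum_nonneg fun ω _ => by split_ifs <;> simp [hp]

lemma pushf_apply_pos {p : Ω → ℝ} (hp : ∀ ω, 0 ≤ p ω) (f : Ω → α) {ω : Ω} (hω : 0 < p ω) :
    0 < pushf p f (f ω) :=
  Finset.sum_pos' (fun ω' _ => by split_ifs <;> simp [hp]) ⟨ω, Finset.mem_univ ω, by simpa⟩

lemma sum_pushf_mul [Fintype α] (p : Ω → ℝ) (f : Ω → α) (w : α → ℝ) :
    ∑ x, pushf p f x * w x = ∑ ω, p ω * w (f ω) := by
  simp only [pushf, Finset.sum_mul]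
  rw [Finset.sum_comm]
  simp

lemma sum_pushf [Fintype α] (p : Ω → ℝ) (f : Ω → α) : ∑ x, pushf p f x = ∑ ω, p ω := by
  simpa using sum_pushf_mul p f fun _ => 1

lemma sum_pushf_prodMk_left [Fintype α] (p : Ω → ℝ) (f : Ω → α) (g : Ω → β) (y : β) :
    ∑ x, pushf p (fun ω => (f ω, g ω)) (x, y) = pushf p g y := by
  simp only [pushf, Prod.mk.injEq, ite_and]
  rw [Finset.sum_comm]
  simp

end PushforwardMass

section Entropy

variable {Ω α β γ : Type*} [Fintype Ω] [Fintype α] [Fintype β] [Fintype γ]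

lemma entRV_eq_neg_sum (p : Ω → ℝ) (f : Ω → α) :
    entRV p f = -∑ ω, p ω * Real.logb 2 (pushf p f (f ω)) := by
  rw [entRV, ent, sum_pushf_mul p f fun x => Real.logb 2 (pushf p f x)]

lemma entRV_congr (p : Ω → ℝ) {f : Ω → α} {g : Ω → β} (hfg : f.FactorsThrough g)
    (hgf : g.FactorsThrough f) : entRV p f = entRV p g := by
  have fiber_eq (ω ω' : Ω) : f ω = f ω' ↔ g ω = g ω' := ⟨fun h => hgf h, fun h => hfg h⟩
  simp only [entRV_eq_neg_sum, pushf, fiber_eq]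

lemma condEnt_congr_left (p : Ω → ℝ) {f : Ω → α} {g : Ω → β} (h : Ω → γ)
    (hfg : f.FactorsThrough g) (hgf : g.FactorsThrough f) : condEnt p f h = condEnt p g h := by
  rw [condEnt, condEnt, entRV_congr p (f := fun ω => (f ω, h ω)) (g := fun ω => (g ω, h ω))]
  · exact fun a b hab => Prod.ext (hfg (Prod.ext_iff.1 hab).1) (Prod.ext_iff.1 hab).2
  · exact fun a b hab => Prod.ext (hgf (Prod.ext_iff.1 hab).1) (Prod.ext_iff.1 hab).2

lemma condEnt_congr_right (p : Ω → ℝ) (f : Ω → α) {g : Ω → β} {h : Ω → γ}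
    (hgh : g.FactorsThrough h) (hhg : h.FactorsThrough g) : condEnt p f g = condEnt p f h := by
  rw [condEnt, condEnt, entRV_congr p hgh hhg,
    entRV_congr p (f := fun ω => (f ω, g ω)) (g := fun ω => (f ω, h ω))]
  · exact fun a b hab => Prod.ext (Prod.ext_iff.1 hab).1 (hgh (Prod.ext_iff.1 hab).2)
  · exact fun a b hab => Prod.ext (Prod.ext_iff.1 hab).1 (hhg (Prod.ext_iff.1 hab).2)

lemma condEnt_prodMk (p : Ω → ℝ) (f : Ω → α) (g : Ω → β) (h : Ω → γ) :
    condEnt p (fun ω => (f ω, g ω)) h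
      = condEnt p f (fun ω => (g ω, h ω)) + condEnt p g h := by
  have assoc : entRV p (fun ω => ((f ω, g ω), h ω)) = entRV p (fun ω => (f ω, g ω, h ω)) :=
    entRV_congr p (fun a b hab => by simp_all) (fun a b hab => by simp_all)
  simp only [condEnt, assoc]
  ring

lemma cmi_eq_condEnt_sub_condEnt (p : Ω → ℝ) (f : Ω → α) (g : Ω → β) (h : Ω → γ) :
    cmi p f g h = condEnt p f h - condEnt p f (fun ω => (g ω, h ω)) := by
  simp only [cmi, condEnt]
  ring

lemma cmi_comm (p : Ω → ℝ) (f : Ω → α) (g : Ω → β) (h : Ω → γ) :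
    cmi p f g h = cmi p g f h := by
  have swap : entRV p (fun ω => (f ω, g ω, h ω)) = entRV p (fun ω => (g ω, f ω, h ω)) :=
    entRV_congr p (fun a b hab => by simp_all) (fun a b hab => by simp_all)
  simp only [cmi, swap]
  ring

end Entropy

section Nonnegativity

variable {Ω α β γ : Type*} [Fintype Ω]

lemma sum_mul_logb_div_nonneg {P Q : Ω → ℝ} {b : ℝ} (hb : 1 < b) (hP : ∀ ω, 0 ≤ P ω)
    (hQ : ∀ ω, 0 ≤ Q ω) (hPQ : ∀ ω, Q ω = 0 → P ω = 0) (hsum : ∑ ω, Q ω ≤ ∑ ω, P ω) :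
    0 ≤ ∑ ω, P ω * Real.logb b (P ω / Q ω) := by
  have sub_le_mul_log (ω : Ω) : P ω - Q ω ≤ P ω * Real.log (P ω / Q ω) := by
    rcases (hP ω).eq_or_lt with hPω | hPω
    · simp [← hPω, hQ]
    have hQω : 0 < Q ω := (hQ ω).lt_of_ne' fun h => hPω.ne' (hPQ ω h)
    calc P ω - Q ω = P ω * (1 - (P ω / Q ω)⁻¹) := by field_simp
      _ ≤ P ω * Real.log (P ω / Q ω) := by
        gcongr
        exact Real.one_sub_inv_le_log_of_pos (by positivity)
  have sum_log_nonneg : 0 ≤ ∑ ω, P ω * Real.log (P ω / Q ω) :=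
    calc 0 ≤ ∑ ω, (P ω - Q ω) := by simpa [Finset.sum_sub_distrib] using hsum
      _ ≤ _ := Finset.sum_le_sum fun ω _ => sub_le_mul_log ω
  simp only [Real.logb, ← mul_div_assoc, ← Finset.sum_div]
  exact div_nonneg sum_log_nonneg (Real.log_pos hb).le

/-- The law of `(f, g, h)` modified so that `f` and `g` are conditionally independent given `h`,
with the laws of `(f, h)` and `(g, h)` unchanged. Division by zero gives it the value `0` where
the law of `h` vanishes. -/
def condIndepLaw (p : Ω → ℝ) (f : Ω → α) (g : Ω → β) (h : Ω → γ) : α × β × γ → ℝ :=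
  fun t => pushf p (fun ω => (f ω, h ω)) (t.1, t.2.2)
    * pushf p (fun ω => (g ω, h ω)) (t.2.1, t.2.2) / pushf p h t.2.2

lemma condIndepLaw_nonneg {p : Ω → ℝ} (hp : ∀ ω, 0 ≤ p ω) (f : Ω → α) (g : Ω → β) (h : Ω → γ)
    (t : α × β × γ) : 0 ≤ condIndepLaw p f g h t :=
  div_nonneg (mul_nonneg (pushf_nonneg hp _ _) (pushf_nonneg hp _ _)) (pushf_nonneg hp _ _)

lemma condIndepLaw_apply_pos {p : Ω → ℝ} (hp : ∀ ω, 0 ≤ p ω) (f : Ω → α) (g : Ω → β)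
    (h : Ω → γ) {ω : Ω} (hω : 0 < p ω) : 0 < condIndepLaw p f g h (f ω, g ω, h ω) :=
  div_pos (mul_pos (pushf_apply_pos hp (fun ω => (f ω, h ω)) hω)
    (pushf_apply_pos hp (fun ω => (g ω, h ω)) hω)) (pushf_apply_pos hp h hω)

lemma pushf_eq_zero_of_condIndepLaw_eq_zero {p : Ω → ℝ} (hp : ∀ ω, 0 ≤ p ω) (f : Ω → α)
    (g : Ω → β) (h : Ω → γ) {t : α × β × γ} (ht : condIndepLaw p f g h t = 0) :
    pushf p (fun ω => (f ω, g ω, h ω)) t = 0 := by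
  refine Finset.sum_eq_zero fun ω _ => ?_
  split_ifs with hωt
  · subst hωt
    by_contra hω
    exact (condIndepLaw_apply_pos hp f g h ((hp ω).lt_of_ne' hω)).ne' ht
  · rfl

variable [Fintype α] [Fintype β] [Fintype γ]

lemma sum_condIndepLaw (p : Ω → ℝ) (f : Ω → α) (g : Ω → β) (h : Ω → γ) :
    ∑ t, condIndepLaw p f g h t = ∑ ω, p ω := by
  simp only [condIndepLaw, Fintype.sum_prod_type_right, ← Finset.sum_div, ← Finset.sum_mul,
    ← Finset.mul_sum, sum_pushf_prodMk_left, mul_self_div_self, sum_pushf]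

lemma cmi_eq_sum_mul_logb_div {p : Ω → ℝ} (hp : ∀ ω, 0 ≤ p ω) (f : Ω → α) (g : Ω → β)
    (h : Ω → γ) :
    cmi p f g h = ∑ t, pushf p (fun ω => (f ω, g ω, h ω)) t
      * Real.logb 2 (pushf p (fun ω => (f ω, g ω, h ω)) t / condIndepLaw p f g h t) := by
  rw [sum_pushf_mul p _ fun t =>
    Real.logb 2 (pushf p (fun ω => (f ω, g ω, h ω)) t / condIndepLaw p f g h t)]
  simp only [cmi, entRV_eq_neg_sum, ← Finset.sum_neg_distrib, ← Finset.sum_add_distrib,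
    ← Finset.sum_sub_distrib]
  refine Finset.sum_congr rfl fun ω _ => ?_
  rcases (hp ω).eq_or_lt with hω | hω
  · simp [← hω]
  have hfgh := (pushf_apply_pos hp (fun ω => (f ω, g ω, h ω)) hω).ne'
  have hfh := (pushf_apply_pos hp (fun ω => (f ω, h ω)) hω).ne'
  have hgh := (pushf_apply_pos hp (fun ω => (g ω, h ω)) hω).ne'
  have hh := (pushf_apply_pos hp h hω).ne'
  rw [Real.logb_div hfgh (condIndepLaw_apply_pos hp f g h hω).ne', condIndepLaw,
    Real.logb_div (mul_ne_zero hfh hgh) hh, Real.logb_mul hfh hgh]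
  ring

theorem cmi_nonneg {p : Ω → ℝ} (hp : ∀ ω, 0 ≤ p ω) (f : Ω → α) (g : Ω → β) (h : Ω → γ) :
    0 ≤ cmi p f g h := by
  rw [cmi_eq_sum_mul_logb_div hp]
  exact sum_mul_logb_div_nonneg one_lt_two (pushf_nonneg hp _) (condIndepLaw_nonneg hp f g h)
    (fun _ => pushf_eq_zero_of_condIndepLaw_eq_zero hp f g h)
    (by rw [sum_condIndepLaw, sum_pushf])

theorem condEnt_le_condEnt_of_factorsThrough {p : Ω → ℝ} (hp : ∀ ω, 0 ≤ p ω) (f : Ω → α)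
    {g : Ω → β} {h : Ω → γ} (hhg : h.FactorsThrough g) : condEnt p f g ≤ condEnt p f h := by
  have condEnt_pair : condEnt p f (fun ω => (g ω, h ω)) = condEnt p f g :=
    condEnt_congr_right p f (fun a b hab => Prod.ext hab (hhg hab))
      (fun a b hab => congrArg Prod.fst hab)
  have cmi_given_h := cmi_nonneg hp f g h
  rw [cmi_eq_condEnt_sub_condEnt, condEnt_pair] at cmi_given_h
  linarith

end Nonnegativity

section ChainRule

variable {Ω ι β : Type*} {α : ι → Type*} [Fintype Ω] [LinearOrder ι] [∀ i, Fintype (α i)]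
  [Fintype β]

lemma condEnt_restrict_eq_sum (p : Ω → ℝ) (X : Ω → ∀ i, α i) (Y : Ω → β) (s : Finset ι) :
    condEnt p (fun ω => s.restrict (X ω)) Y = ∑ i ∈ s, condEnt p (fun ω => X ω i)
      (fun ω => (({j ∈ s | j < i} : Finset ι).restrict (X ω), Y ω)) := by
  induction s using Finset.induction_on_max with
  | empty =>
    have restrict_empty : entRV p (fun ω => ((∅ : Finset ι).restrict (X ω), Y ω)) = entRV p Y :=
      entRV_congr p (fun a b hab => Prod.ext (Subsingleton.elim _ _) hab)
        (fun a b hab => congrArg Prod.snd hab)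
    simp [condEnt, restrict_empty]
  | insert m s hm ih =>
    have split_max : condEnt p (fun ω => (insert m s).restrict (X ω)) Y
        = condEnt p (fun ω => (X ω m, s.restrict (X ω))) Y :=
      condEnt_congr_left p Y (fun a b hab => by simp_all [funext_iff])
        (fun a b hab => by simp_all [funext_iff])
    have hms : m ∉ s := fun h => (hm m h).false
    have below_max : ({j ∈ insert m s | j < m} : Finset ι) = s := by
      rw [Finset.filter_insert, if_neg (lt_irrefl m), Finset.filter_true_of_mem hm]
    have below_of_mem {i : ι} (hi : i ∈ s) :
        ({j ∈ insert m s | j < i} : Finset ι) = {j ∈ s | j < i} := by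
      rw [Finset.filter_insert, if_neg (hm i hi).not_gt]
    rw [split_max, condEnt_prodMk, ih, Finset.sum_insert hms, below_max]
    congr 1
    exact Finset.sum_congr rfl fun i hi => by rw [below_of_mem hi]

theorem condEnt_eq_sum_condEnt_restrict_lt [Fintype ι] (p : Ω → ℝ) (X : Ω → ∀ i, α i)
    (Y : Ω → β) :
    condEnt p X Y = ∑ i, condEnt p (fun ω => X ω i)
      (fun ω => (({j | j < i} : Finset ι).restrict (X ω), Y ω)) := by
  rw [← condEnt_restrict_eq_sum]
  exact condEnt_congr_left p Y (fun a b hab => by simp_all [funext_iff])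
    (fun a b hab => by simp_all)

end ChainRule

theorem multiletter_single_letter_lower_bound_general
    {Ω ι WT : Type*} {ST XT UT AT : ι → Type*} [Fintype Ω] [Fintype ι] [LinearOrder ι]
    [Fintype WT] [∀ i, Fintype (ST i)] [∀ i, Fintype (XT i)] [∀ i, Fintype (UT i)]
    [∀ i, Fintype (AT i)] {p : Ω → ℝ} (hp : ∀ ω, 0 ≤ p ω)
    (W : Ω → WT) (S : Ω → ∀ i, ST i) (X : Ω → ∀ i, XT i)
    (U : ∀ i, Ω → UT i) (A : ∀ i, Ω → AT i)
    (hU : ∀ i, (U i).FactorsThrough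
      fun ω => (({j | j < i} : Finset ι).restrict (X ω), W ω, S ω))
    (hA : ∀ i, (fun ω => (({j | j < i} : Finset ι).restrict (X ω), S ω)).FactorsThrough
      fun ω => (A i ω, S ω i)) :
    ∑ i, cmi p (U i) (fun ω => X ω i) (fun ω => S ω i)
        - ∑ i, cmi p (fun ω => X ω i) (A i) (fun ω => S ω i)
      ≤ cmi p W X S := by
  rw [cmi_comm p W, cmi_eq_condEnt_sub_condEnt, condEnt_eq_sum_condEnt_restrict_lt,
    condEnt_eq_sum_condEnt_restrict_lt, ← Finset.sum_sub_distrib, ← Finset.sum_sub_distrib]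
  refine Finset.sum_le_sum fun i _ => ?_
  rw [cmi_comm p (U i), cmi_eq_condEnt_sub_condEnt, cmi_eq_condEnt_sub_condEnt]
  have condEnt_le_of_U := condEnt_le_condEnt_of_factorsThrough hp (fun ω => X ω i)
    (h := fun ω => (U i ω, S ω i)) fun a b hab => Prod.ext (hU i hab) (by simp_all)
  have condEnt_A_le := condEnt_le_condEnt_of_factorsThrough hp (fun ω => X ω i) (hA i)
  linarith

section MaskedSequences

variable {Ω ι α β : Type*}

lemma ite_some_none_eq_iff {c : ι → Prop} [DecidablePred c] {x y : ι → α} :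
    ((fun j => if c j then some (x j) else none) = fun j => if c j then some (y j) else none)
      ↔ ∀ j, c j → x j = y j := by
  refine funext_iff.trans (forall_congr' fun j => ?_)
  by_cases hj : c j <;> simp [hj]

lemma restrict_lt_prodMk_factorsThrough_masked [Fintype ι] [LinearOrder ι] (X : Ω → ι → α)
    (S : Ω → ι → β) (i : ι) :
    (fun ω => (({j | j < i} : Finset ι).restrict (X ω), S ω)).FactorsThrough
      fun ω => (((fun j => if j < i then some (X ω j) else none),
        (fun j => if j < i then some (S ω j) else none),
        (fun j => if i < j then some (S ω j) else none)), S ω i) := by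
  intro a b hab
  simp only [Prod.mk.injEq, ite_some_none_eq_iff] at hab
  obtain ⟨⟨hX_lt, hS_lt, hS_gt⟩, hS_eq⟩ := hab
  refine Prod.ext (funext fun j => hX_lt j (Finset.mem_filter.1 j.2).2) (funext fun j => ?_)
  rcases lt_trichotomy j i with hj | rfl | hj
  exacts [hS_lt j hj, hS_eq, hS_gt j hj]

end MaskedSequences

/-- **Multi-letter to single-letter lower bound with auxiliary identification** (key
converse step).  For arbitrary finitely-valued `M, K, Sⁿ, Xⁿ` with any joint law,
setting `Uᵢ = (M, K, S_{i+1:n}, X_{1:i−1})` and `Aᵢ = (X_{1:i−1}, S_{1:i−1}, S_{i+1:n})`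
(subsequences encoded by masking the complementary coordinates with `none`):
`I(M,K; Xⁿ | Sⁿ) ≥ Σᵢ I(Uᵢ; Xᵢ | Sᵢ) − Σᵢ I(Xᵢ; Aᵢ | Sᵢ)`. -/
theorem multiletter_single_letter_lower_bound
    {Ω MT KT ST XT : Type*} [Fintype Ω] [Fintype MT] [Fintype KT] [Fintype ST] [Fintype XT]
    (n : ℕ)
    (p : Ω → ℝ) (hp0 : ∀ ω, 0 ≤ p ω) (hp1 : ∑ ω, p ω = 1)
    (fM : Ω → MT) (fK : Ω → KT) (fS : Ω → Fin n → ST) (fX : Ω → Fin n → XT) :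
    cmi p (fun ω => (fM ω, fK ω)) fX fS ≥
      (∑ i : Fin n, cmi p
          (fun ω => (fM ω, fK ω,
            (fun j : Fin n => if i < j then some (fS ω j) else none),
            (fun j : Fin n => if j < i then some (fX ω j) else none)))
          (fun ω => fX ω i) (fun ω => fS ω i))
      - ∑ i : Fin n, cmi p
          (fun ω => fX ω i)
          (fun ω => ((fun j : Fin n => if j < i then some (fX ω j) else none),
            (fun j : Fin n => if j < i then some (fS ω j) else none),
            (fun j : Fin n => if i < j then some (fS ω j) else none)))
          (fun ω => fS ω i) :=
  multiletter_single_letter_lower_bound_general hp0 _ fS fX _ _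
    (fun i a b hab => by simp_all [funext_iff]) (restrict_lt_prodMk_factorsThrough_masked fX fS)
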